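/- Let α > 0 and β > 0 with α + β < 1, let b ≥ 0 and T > 0. Then there exists a constant C ≥ 1, depending only on α, β, b and T, such that for every a ≥ 0 and every nonnegative measurable function u on [0,T] with t ↦ t^{−β} u(t) integrable on [0,T], the integral inequality u(t) ≤ a + b ∫_0^t (t−s)^{−α} s^{−β} u(s) ds for all t ∈ [0,T] implies u(t) ≤ C · a for all t ∈ [0,T]. -/

import Mathlib

open MeasureTheory

/-!
Damp the unknown: `w s = e^{-l s} u(s)` satisfies `w ≤ a + b K w`, where `K` has the kernel
`(t - s)^{-α} e^{-l (t - s)} s^{-β}`. Comparing `s` with `t - s` bounds this kernel by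
`φ (t - s) + φ s` with `φ x = x^{-(α+β)} e^{-l x}`, whose integral is
`m = Γ(1 - α - β) l^{-(1 - α - β)}`. Hence `K 1 ≤ 2m`, and for `l` so large that `4 b m ≤ 1` the
constant `2a` is a supersolution. The excess `d = (w - 2a)⁺` then satisfies `d ≤ b K d`. As
`∫ t^{-β} K d ≤ m ∫ s^{-β} d`, the a priori integrability of `s^{-β} u` forces `d = 0`, so that
`u(t) ≤ 2a e^{l t}`.
-/

section TemperedVolterra

open Set
open scoped ENNReal

variable {α β γ l : ℝ}

lemma ofReal_integral_le_lintegral_ofReal {X : Type*} [MeasurableSpace X] {μ : Measure X}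
    (f : X → ℝ) : ENNReal.ofReal (∫ x, f x ∂μ) ≤ ∫⁻ x, ENNReal.ofReal (f x) ∂μ := by
  by_cases hf : Integrable f μ
  · rw [integral_eq_lintegral_pos_part_sub_lintegral_neg_part hf]
    exact (ENNReal.ofReal_le_ofReal (sub_le_self _ ENNReal.toReal_nonneg)).trans
      ENNReal.ofReal_toReal_le
  · simp [integral_undef hf]

/-- The tempered power kernel `x^{-γ} e^{-l x}` on the positive half-line. It is set to `0` for
`x ≤ 0`, so that products such as `temperedPower α l (t - s) * temperedPower β 0 s` vanish unless
`0 < s < t` and all integrals can be taken over `ℝ`. -/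
noncomputable def temperedPower (γ l : ℝ) : ℝ → ℝ≥0∞ :=
  (Ioi 0).indicator fun x => ENNReal.ofReal (x ^ (-γ) * Real.exp (-(l * x)))

lemma temperedPower_of_pos {x : ℝ} (hx : 0 < x) :
    temperedPower γ l x = ENNReal.ofReal (x ^ (-γ) * Real.exp (-(l * x))) :=
  indicator_of_mem (mem_Ioi.2 hx) _

lemma temperedPower_of_nonpos {x : ℝ} (hx : x ≤ 0) : temperedPower γ l x = 0 :=
  indicator_of_notMem (notMem_Ioi.2 hx) _

@[fun_prop]
lemma measurable_temperedPower (γ l : ℝ) : Measurable (temperedPower γ l) :=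
  Measurable.indicator (by fun_prop) measurableSet_Ioi

lemma temperedPower_mul (γ δ l k x : ℝ) :
    temperedPower γ l x * temperedPower δ k x = temperedPower (γ + δ) (l + k) x := by
  rcases le_or_gt x 0 with hx | hx
  · simp only [temperedPower_of_nonpos hx, mul_zero]
  · simp only [temperedPower_of_pos hx]
    rw [← ENNReal.ofReal_mul (by positivity), neg_add, Real.rpow_add hx, add_mul, neg_add,
      Real.exp_add]
    ring_nf

lemma antitoneOn_temperedPower (hγ : 0 ≤ γ) (hl : 0 ≤ l) :
    AntitoneOn (temperedPower γ l) (Ioi 0) := by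
  intro x hx y hy hxy
  rw [mem_Ioi] at hx hy
  rw [temperedPower_of_pos hx, temperedPower_of_pos hy]
  have hpow : y ^ (-γ) ≤ x ^ (-γ) :=
    Real.rpow_le_rpow_of_nonpos hx hxy (neg_nonpos.2 hγ)
  gcongr

lemma lintegral_temperedPower (hγ : γ < 1) (hl : 0 < l) :
    ∫⁻ x, temperedPower γ l x = ENNReal.ofReal (Real.Gamma (1 - γ) * l ^ (-(1 - γ))) := by
  have hvalue : ∫ x in Ioi 0, x ^ (-γ) * Real.exp (-(l * x)) =
      Real.Gamma (1 - γ) * l ^ (-(1 - γ)) := by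
    have h := Real.integral_rpow_mul_exp_neg_mul_Ioi (sub_pos.2 hγ) hl
    rwa [one_div, Real.inv_rpow hl.le, ← Real.rpow_neg hl.le, mul_comm, sub_sub_cancel_left] at h
  have hpos : 0 < Real.Gamma (1 - γ) * l ^ (-(1 - γ)) :=
    mul_pos (Real.Gamma_pos_of_pos (sub_pos.2 hγ)) (Real.rpow_pos_of_pos hl _)
  -- A nonzero integral is not the junk value.
  have hintegrable : IntegrableOn (fun x => x ^ (-γ) * Real.exp (-(l * x))) (Ioi 0) :=
    Integrable.of_integral_ne_zero (hvalue ▸ hpos.ne')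
  rw [temperedPower, lintegral_indicator measurableSet_Ioi, ← hvalue,
    ofReal_integral_eq_lintegral_ofReal hintegrable]
  filter_upwards [ae_restrict_mem measurableSet_Ioi] with x hx
  exact mul_nonneg (Real.rpow_nonneg (le_of_lt hx) _) (Real.exp_pos _).le

lemma temperedPower_mul_temperedPower_le_add (hα : 0 ≤ α) (hβ : 0 ≤ β) (hl : 0 ≤ l) (x y : ℝ) :
    temperedPower α l x * temperedPower β 0 y ≤
      temperedPower (α + β) l x + temperedPower (α + β) l y := by
  rcases le_or_gt x 0 with hx | hx
  · simp [temperedPower_of_nonpos hx]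
  rcases le_or_gt y 0 with hy | hy
  · simp [temperedPower_of_nonpos hy]
  have hmul (z : ℝ) : temperedPower α l z * temperedPower β 0 z = temperedPower (α + β) l z := by
    rw [temperedPower_mul, add_zero]
  rw [← hmul x, ← hmul y]
  rcases le_total x y with hxy | hyx
  · exact le_add_right (by gcongr; exact antitoneOn_temperedPower hβ le_rfl hx hy hxy)
  · exact le_add_left (by gcongr; exact antitoneOn_temperedPower hα hl hy hx hyx)

/-- The Volterra operator `w ↦ ∫_0^t (t - s)^{-α} e^{-l (t - s)} s^{-β} w(s) ds`, which is
`w ↦ ∫_0^t (t - s)^{-α} s^{-β} w(s) ds` conjugated by `e^{l t}`. It acts on `[0, ∞]`-valued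
functions, so that no integrability is required. -/
noncomputable def temperedVolterra (α β l : ℝ) (w : ℝ → ℝ≥0∞) (t : ℝ) : ℝ≥0∞ :=
  ∫⁻ s, temperedPower α l (t - s) * temperedPower β 0 s * w s

lemma temperedVolterra_mono {v w : ℝ → ℝ≥0∞} (h : v ≤ w) (t : ℝ) :
    temperedVolterra α β l v t ≤ temperedVolterra α β l w t :=
  lintegral_mono fun s => by gcongr; exact h s

lemma temperedVolterra_const_add (c : ℝ≥0∞) (w : ℝ → ℝ≥0∞) (t : ℝ) :
    temperedVolterra α β l (fun s => c + w s) t =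
      temperedVolterra α β l (fun _ => c) t + temperedVolterra α β l w t := by
  simp only [temperedVolterra, mul_add]
  exact lintegral_add_left (by fun_prop) _

lemma temperedVolterra_const_le (hα : 0 ≤ α) (hβ : 0 ≤ β) (hl : 0 ≤ l) (c : ℝ≥0∞) (t : ℝ) :
    temperedVolterra α β l (fun _ => c) t ≤ 2 * (∫⁻ x, temperedPower (α + β) l x) * c := by
  rw [temperedVolterra, lintegral_mul_const _ (by fun_prop)]
  gcongr
  calc ∫⁻ s, temperedPower α l (t - s) * temperedPower β 0 s
    _ ≤ ∫⁻ s, (temperedPower (α + β) l (t - s) + temperedPower (α + β) l s) :=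
        lintegral_mono fun s => temperedPower_mul_temperedPower_le_add hα hβ hl (t - s) s
    _ = 2 * ∫⁻ x, temperedPower (α + β) l x := by
        rw [lintegral_add_left (by fun_prop), lintegral_sub_left_eq_self, two_mul]

lemma lintegral_temperedPower_mul_comp_sub_le (hβ : 0 ≤ β) {s : ℝ} (hs : 0 ≤ s) :
    ∫⁻ t, temperedPower β 0 t * temperedPower α l (t - s) ≤ ∫⁻ x, temperedPower (α + β) l x := by
  rw [← lintegral_sub_right_eq_self (temperedPower (α + β) l) s]
  refine lintegral_mono fun t => ?_
  rcases le_or_gt (t - s) 0 with hts | hts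
  · simp [temperedPower_of_nonpos hts]
  have ht : t - s ≤ t := sub_le_self t hs
  calc temperedPower β 0 t * temperedPower α l (t - s)
    _ ≤ temperedPower β 0 (t - s) * temperedPower α l (t - s) := by
        gcongr
        exact antitoneOn_temperedPower hβ le_rfl hts (hts.trans_le ht) ht
    _ = temperedPower (α + β) l (t - s) := by
        rw [mul_comm, temperedPower_mul, add_zero]

lemma lintegral_temperedPower_mul_temperedVolterra_le (hβ : 0 ≤ β) {w : ℝ → ℝ≥0∞}
    (hw : AEMeasurable w) :
    ∫⁻ t, temperedPower β 0 t * temperedVolterra α β l w t ≤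
      (∫⁻ x, temperedPower (α + β) l x) * ∫⁻ s, temperedPower β 0 s * w s := by
  have hcolumn (s : ℝ) :
      ∫⁻ t, temperedPower β 0 t * (temperedPower α l (t - s) * temperedPower β 0 s * w s) ≤
        (∫⁻ x, temperedPower (α + β) l x) * (temperedPower β 0 s * w s) := by
    rcases le_or_gt s 0 with hs | hs
    · simp [temperedPower_of_nonpos hs]
    simp only [mul_assoc (temperedPower α l _), ← mul_assoc (temperedPower β 0 _)]
    rw [lintegral_mul_const _ (by fun_prop)]
    exact mul_le_mul_left (lintegral_temperedPower_mul_comp_sub_le hβ hs.le) _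
  calc ∫⁻ t, temperedPower β 0 t * temperedVolterra α β l w t
    _ = ∫⁻ t, ∫⁻ s,
          temperedPower β 0 t * (temperedPower α l (t - s) * temperedPower β 0 s * w s) := by
        refine lintegral_congr fun t => (lintegral_const_mul'' _ ?_).symm
        exact (Measurable.aemeasurable (by fun_prop)).mul hw
    _ = ∫⁻ s, ∫⁻ t,
          temperedPower β 0 t * (temperedPower α l (t - s) * temperedPower β 0 s * w s) :=
        lintegral_lintegral_swap (by fun_prop)
    _ ≤ ∫⁻ s, (∫⁻ x, temperedPower (α + β) l x) * (temperedPower β 0 s * w s) :=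
        lintegral_mono hcolumn
    _ = (∫⁻ x, temperedPower (α + β) l x) * ∫⁻ s, temperedPower β 0 s * w s :=
        lintegral_const_mul'' _ (by fun_prop)

lemma eq_zero_of_le_mul_temperedVolterra (hβ : 0 ≤ β) {b : ℝ≥0∞}
    (hb_top : b ≠ ∞) (hb : b * ∫⁻ x, temperedPower (α + β) l x < 1) {w : ℝ → ℝ≥0∞}
    (hw : AEMeasurable w) (hfin : ∫⁻ s, temperedPower β 0 s * w s ≠ ∞)
    (hle : ∀ t, w t ≤ b * temperedVolterra α β l w t) : w = 0 := by
  set m := ∫⁻ x, temperedPower (α + β) l x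
  set I := ∫⁻ s, temperedPower β 0 s * w s
  have hcontract : I ≤ b * m * I :=
    calc I
      _ ≤ ∫⁻ t, b * (temperedPower β 0 t * temperedVolterra α β l w t) :=
          lintegral_mono fun t => by
            rw [mul_left_comm]
            gcongr
            exact hle t
      _ = b * ∫⁻ t, temperedPower β 0 t * temperedVolterra α β l w t :=
          lintegral_const_mul' _ _ hb_top
      _ ≤ b * (m * I) := by
          gcongr
          exact lintegral_temperedPower_mul_temperedVolterra_le hβ hw
      _ = b * m * I := (mul_assoc b m I).symm
  have hI_zero : I = 0 := by
    by_contra hne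
    refine hcontract.not_gt ?_
    calc b * m * I
      _ < 1 * I := (ENNReal.mul_lt_mul_iff_left hne hfin).2 hb
      _ = I := one_mul I
  have hae : (fun s => temperedPower β 0 s * w s) =ᵐ[volume] 0 :=
    (lintegral_eq_zero_iff' ((measurable_temperedPower β 0).aemeasurable.mul hw)).1 hI_zero
  have hvolterra (t : ℝ) : temperedVolterra α β l w t = 0 := by
    refine lintegral_eq_zero_of_ae_eq_zero ?_
    filter_upwards [hae] with s hs
    rw [mul_assoc, hs, Pi.zero_apply, mul_zero]
  funext t
  simpa [hvolterra t] using hle t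

lemma add_mul_temperedVolterra_two_mul_le (hα : 0 ≤ α) (hβ : 0 ≤ β) (hl : 0 ≤ l) {b : ℝ≥0∞}
    (hb : 4 * (b * ∫⁻ x, temperedPower (α + β) l x) ≤ 1) (a : ℝ≥0∞) (t : ℝ) :
    a + b * temperedVolterra α β l (fun _ => 2 * a) t ≤ 2 * a := by
  set m := ∫⁻ x, temperedPower (α + β) l x
  calc a + b * temperedVolterra α β l (fun _ => 2 * a) t
    _ ≤ a + b * (2 * m * (2 * a)) := by
        gcongr
        exact temperedVolterra_const_le hα hβ hl (2 * a) t
    _ = a + 4 * (b * m) * a := by ring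
    _ ≤ a + 1 * a := by gcongr
    _ = 2 * a := by ring

lemma le_two_mul_of_le_add_mul_temperedVolterra (hα : 0 ≤ α) (hβ : 0 ≤ β) (hl : 0 ≤ l)
    {a b : ℝ≥0∞} (hb_top : b ≠ ∞) (hb : 4 * (b * ∫⁻ x, temperedPower (α + β) l x) ≤ 1)
    {w : ℝ → ℝ≥0∞} (hw : AEMeasurable w) (hfin : ∫⁻ s, temperedPower β 0 s * w s ≠ ∞)
    (hle : ∀ t, w t ≤ a + b * temperedVolterra α β l w t) (t : ℝ) : w t ≤ 2 * a := by
  set m := ∫⁻ x, temperedPower (α + β) l x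
  have hexcess (t : ℝ) : w t - 2 * a ≤ b * temperedVolterra α β l (fun s => w s - 2 * a) t := by
    rw [tsub_le_iff_left]
    calc w t
      _ ≤ a + b * temperedVolterra α β l w t := hle t
      _ ≤ a + b * temperedVolterra α β l (fun s => 2 * a + (w s - 2 * a)) t := by
          gcongr
          exact temperedVolterra_mono (fun s => le_add_tsub) t
      _ = a + b * temperedVolterra α β l (fun _ => 2 * a) t +
            b * temperedVolterra α β l (fun s => w s - 2 * a) t := by
          rw [temperedVolterra_const_add, mul_add, add_assoc]
      _ ≤ 2 * a + b * temperedVolterra α β l (fun s => w s - 2 * a) t := by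
          gcongr
          exact add_mul_temperedVolterra_two_mul_le hα hβ hl hb a t
  have hbm : b * m < 1 :=
    calc b * m
      _ ≤ 4⁻¹ := by rwa [ENNReal.le_inv_iff_mul_le, mul_comm]
      _ < 1 := by simp
  have hexcess_fin : ∫⁻ s, temperedPower β 0 s * (w s - 2 * a) ≠ ∞ :=
    ne_top_of_le_ne_top hfin (lintegral_mono fun s => by gcongr; exact tsub_le_self)
  have hzero : (fun s => w s - 2 * a) = 0 :=
    eq_zero_of_le_mul_temperedVolterra hβ hb_top hbm (hw.sub_const _) hexcess_fin hexcess
  exact tsub_eq_zero_iff_le.1 (congrFun hzero t)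

/-- The positive part of `e^{-l t} u(t)`, cut off to `[0, T]` so that an integral inequality on
`[0, T]` becomes one on all of `ℝ`. -/
noncomputable def temperedPosPart (l T : ℝ) (u : ℝ → ℝ) : ℝ → ℝ≥0∞ :=
  (Icc 0 T).indicator fun t => ENNReal.ofReal (Real.exp (-(l * t)) * u t)

section PosPart

variable {T : ℝ} {u : ℝ → ℝ}

lemma temperedPosPart_of_mem {t : ℝ} (ht : t ∈ Icc 0 T) :
    temperedPosPart l T u t = ENNReal.ofReal (Real.exp (-(l * t)) * u t) :=
  indicator_of_mem ht _

lemma aemeasurable_temperedPosPart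
    (hu : AEMeasurable (fun t => t ^ (-β) * u t) (volume.restrict (Icc 0 T))) :
    AEMeasurable (temperedPosPart l T u) := by
  rw [temperedPosPart, aemeasurable_indicator_iff measurableSet_Icc]
  have hu' : AEMeasurable u (volume.restrict (Icc 0 T)) := by
    have hmul : AEMeasurable (fun t : ℝ => t ^ β * (t ^ (-β) * u t))
        (volume.restrict (Icc 0 T)) := by
      fun_prop
    refine hmul.congr ?_
    rw [← restrict_Ioc_eq_restrict_Icc]
    filter_upwards [ae_restrict_mem measurableSet_Ioc] with t ht
    rw [← mul_assoc, ← Real.rpow_add ht.1, add_neg_cancel, Real.rpow_zero, one_mul]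
  fun_prop

lemma lintegral_temperedPower_mul_temperedPosPart_ne_top (hl : 0 ≤ l)
    (hu : IntegrableOn (fun t => t ^ (-β) * u t) (Icc 0 T)) :
    ∫⁻ t, temperedPower β 0 t * temperedPosPart l T u t ≠ ∞ := by
  refine ne_top_of_le_ne_top (Integrable.lintegral_lt_top hu).ne ?_
  rw [← lintegral_indicator measurableSet_Icc]
  refine lintegral_mono fun t => ?_
  by_cases ht : t ∈ Icc 0 T
  swap
  · simp [temperedPosPart, ht]
  rcases ht.1.eq_or_lt with rfl | htpos
  · simp [temperedPower_of_nonpos le_rfl]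
  have hexp : Real.exp (-(l * t)) ≤ 1 := Real.exp_le_one_iff.2 (by nlinarith)
  rw [indicator_of_mem ht, temperedPosPart_of_mem ht, temperedPower_of_pos htpos, zero_mul,
    neg_zero, Real.exp_zero, mul_one, ENNReal.ofReal_mul (by positivity),
    ENNReal.ofReal_mul (by positivity)]
  gcongr
  exact mul_le_of_le_one_left' (ENNReal.ofReal_le_one.2 hexp)

lemma ofReal_exp_mul_integral_le_temperedVolterra {t : ℝ} (ht : t ∈ Icc 0 T) :
    ENNReal.ofReal (Real.exp (-(l * t)) * ∫ s in (0 : ℝ)..t, (t - s) ^ (-α) * s ^ (-β) * u s) ≤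
      temperedVolterra α β l (temperedPosPart l T u) t := by
  rw [intervalIntegral.integral_of_le ht.1, integral_Ioc_eq_integral_Ioo, ← integral_const_mul]
  refine (ofReal_integral_le_lintegral_ofReal _).trans ?_
  refine (setLIntegral_mono' measurableSet_Ioo fun s hs => le_of_eq ?_).trans
    (setLIntegral_le_lintegral (Ioo 0 t) _)
  have hs_pos : 0 < s := hs.1
  have hts : 0 < t - s := sub_pos.2 hs.2
  have hexp : Real.exp (-(l * t)) = Real.exp (-(l * (t - s))) * Real.exp (-(l * s)) := by
    rw [← Real.exp_add]
    ring_nf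
  rw [temperedPosPart_of_mem ⟨hs_pos.le, hs.2.le.trans ht.2⟩, temperedPower_of_pos hts,
    temperedPower_of_pos hs_pos, ← ENNReal.ofReal_mul (by positivity),
    ← ENNReal.ofReal_mul (by positivity), zero_mul, neg_zero, Real.exp_zero, hexp]
  ring_nf

lemma temperedPosPart_le_add_mul_temperedVolterra {a b : ℝ} (ha : 0 ≤ a) (hb : 0 ≤ b) (hl : 0 ≤ l)
    (hu : ∀ t ∈ Icc 0 T, u t ≤ a + b * ∫ s in (0 : ℝ)..t, (t - s) ^ (-α) * s ^ (-β) * u s)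
    (t : ℝ) :
    temperedPosPart l T u t ≤ ENNReal.ofReal a +
      ENNReal.ofReal b * temperedVolterra α β l (temperedPosPart l T u) t := by
  by_cases ht : t ∈ Icc 0 T
  swap
  · simp [temperedPosPart, ht]
  set J := ∫ s in (0 : ℝ)..t, (t - s) ^ (-α) * s ^ (-β) * u s
  have hexp : Real.exp (-(l * t)) ≤ 1 := Real.exp_le_one_iff.2 (by nlinarith [ht.1])
  have hdamped : Real.exp (-(l * t)) * u t ≤ a + b * (Real.exp (-(l * t)) * J) :=
    calc Real.exp (-(l * t)) * u t
      _ ≤ Real.exp (-(l * t)) * (a + b * J) := by gcongr; exact hu t ht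
      _ = Real.exp (-(l * t)) * a + b * (Real.exp (-(l * t)) * J) := by ring
      _ ≤ a + b * (Real.exp (-(l * t)) * J) := by gcongr; exact mul_le_of_le_one_left ha hexp
  calc temperedPosPart l T u t
    _ = ENNReal.ofReal (Real.exp (-(l * t)) * u t) := temperedPosPart_of_mem ht
    _ ≤ ENNReal.ofReal a + ENNReal.ofReal (b * (Real.exp (-(l * t)) * J)) :=
        (ENNReal.ofReal_le_ofReal hdamped).trans ENNReal.ofReal_add_le
    _ ≤ _ := by
        rw [ENNReal.ofReal_mul hb]
        gcongr
        exact ofReal_exp_mul_integral_le_temperedVolterra ht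

lemma le_two_mul_exp_of_le_add_mul_integral {a b : ℝ} (hα : 0 ≤ α) (hβ : 0 ≤ β) (hαβ : α + β < 1)
    (ha : 0 ≤ a) (hb : 0 ≤ b) (hl : 0 < l)
    (hrate : 4 * (b * (Real.Gamma (1 - (α + β)) * l ^ (-(1 - (α + β))))) ≤ 1)
    (hintegrable : IntegrableOn (fun t => t ^ (-β) * u t) (Icc 0 T))
    (hu : ∀ t ∈ Icc 0 T, u t ≤ a + b * ∫ s in (0 : ℝ)..t, (t - s) ^ (-α) * s ^ (-β) * u s)
    {t : ℝ} (ht : t ∈ Icc 0 T) : u t ≤ 2 * a * Real.exp (l * t) := by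
  have hbm : 4 * (ENNReal.ofReal b * ∫⁻ x, temperedPower (α + β) l x) ≤ 1 := by
    rw [lintegral_temperedPower hαβ hl, ← ENNReal.ofReal_mul hb, ← ENNReal.ofReal_ofNat 4,
      ← ENNReal.ofReal_mul (by norm_num)]
    exact ENNReal.ofReal_le_one.2 hrate
  have hw := le_two_mul_of_le_add_mul_temperedVolterra hα hβ hl.le ENNReal.ofReal_ne_top hbm
    (aemeasurable_temperedPosPart hintegrable.aemeasurable)
    (lintegral_temperedPower_mul_temperedPosPart_ne_top hl.le hintegrable)
    (temperedPosPart_le_add_mul_temperedVolterra ha hb hl.le hu) t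
  rw [temperedPosPart_of_mem ht, ← ENNReal.ofReal_ofNat 2, ← ENNReal.ofReal_mul (by norm_num),
    ENNReal.ofReal_le_ofReal_iff (by positivity)] at hw
  rwa [Real.exp_neg, inv_mul_le_iff₀' (Real.exp_pos _)] at hw

end PosPart

end TemperedVolterra

theorem generalized_gronwall_finite_horizon_general (α β b T : ℝ)
    (hα : 0 ≤ α) (hβ : 0 ≤ β) (hαβ : α + β < 1) (hb : 0 ≤ b) :
    ∃ C : ℝ, 1 ≤ C ∧ ∀ a : ℝ, 0 ≤ a → ∀ u : ℝ → ℝ,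
      IntegrableOn (fun t : ℝ => t ^ (-β) * u t) (Set.Icc 0 T) →
      (∀ t ∈ Set.Icc (0 : ℝ) T,
        u t ≤ a + b * ∫ s in (0 : ℝ)..t, (t - s) ^ (-α) * s ^ (-β) * u s) →
      ∀ t ∈ Set.Icc (0 : ℝ) T, u t ≤ C * a := by
  have hlim : Filter.Tendsto
      (fun l : ℝ => 4 * (b * (Real.Gamma (1 - (α + β)) * l ^ (-(1 - (α + β))))))
      Filter.atTop (nhds 0) := by
    simpa using (((tendsto_rpow_neg_atTop (sub_pos.2 hαβ)).const_mul _).const_mul b).const_mul 4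
  obtain ⟨l, hrate, hl⟩ :=
    ((hlim.eventually_le_const one_pos).and (Filter.eventually_gt_atTop 0)).exists
  have hexp : 1 ≤ Real.exp (l * |T|) := Real.one_le_exp (by positivity)
  refine ⟨2 * Real.exp (l * |T|), by linarith, fun a ha u hintegrable hu t ht => ?_⟩
  calc u t
    _ ≤ 2 * a * Real.exp (l * t) :=
        le_two_mul_exp_of_le_add_mul_integral hα hβ hαβ ha hb hl hrate hintegrable hu ht
    _ ≤ 2 * a * Real.exp (l * |T|) := by gcongr; exact ht.2.trans (le_abs_self T)
    _ = 2 * Real.exp (l * |T|) * a := by ring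

/-- Finite-horizon form of the generalized Gronwall inequality with doubly
singular kernel (Lemma 3.5): if `u ≥ 0` satisfies
`u t ≤ a + b ∫_0^t (t-s)^{-α} s^{-β} u s ds` on `[0,T]` with `α, β > 0`,
`α + β < 1`, then `u t ≤ C a` on `[0,T]` for a constant `C = C(α,β,b,T)`. -/
theorem generalized_gronwall_finite_horizon (α β b T : ℝ)
    (hα : 0 < α) (hβ : 0 < β) (hαβ : α + β < 1) (hb : 0 ≤ b) (hT : 0 < T) :
    ∃ C : ℝ, 1 ≤ C ∧ ∀ a : ℝ, 0 ≤ a → ∀ u : ℝ → ℝ, Measurable u →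
      (∀ t ∈ Set.Icc (0 : ℝ) T, 0 ≤ u t) →
      IntegrableOn (fun t : ℝ => t ^ (-β) * u t) (Set.Icc 0 T) →
      (∀ t ∈ Set.Icc (0 : ℝ) T,
        u t ≤ a + b * ∫ s in (0 : ℝ)..t, (t - s) ^ (-α) * s ^ (-β) * u s) →
      ∀ t ∈ Set.Icc (0 : ℝ) T, u t ≤ C * a := by
  obtain ⟨C, hC, hbound⟩ :=
    generalized_gronwall_finite_horizon_general α β b T hα.le hβ.le hαβ hb
  exact ⟨C, hC, fun a ha u _ _ => hbound a ha u⟩
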